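/- Let P = {p₁, p₂, p₃, p₄} and Q = {q₁, q₂, q₃, q₄} be disjoint quadruples with p_i, q_i in the closed quadrant Q_i for i = 1, 2, 3, 4. Suppose p₂ lies in the interior of the triangle p₁p₃p₄ (i.e., p₂ is the center of P), q₂ lies in the interior of the triangle q₁q₃q₄ (i.e., q₂ is the center of Q), the path q₂q₄q₃q₁ is acute (Q is upward), and the y-coordinate of p₂ is at most the y-coordinate of q₂. Then the path p₁p₂q₁q₃q₄ is acute. -/

import Mathlib

open EuclideanGeometry Real

noncomputable section

abbrev Plane := EuclideanSpace ℝ (Fin 2)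

/-- The four closed quadrants of the plane. -/
def InQ1 (p : Plane) : Prop := 0 ≤ p 0 ∧ 0 ≤ p 1
def InQ2 (p : Plane) : Prop := p 0 ≤ 0 ∧ 0 ≤ p 1
def InQ3 (p : Plane) : Prop := p 0 ≤ 0 ∧ p 1 ≤ 0
def InQ4 (p : Plane) : Prop := 0 ≤ p 0 ∧ p 1 ≤ 0

theorem aux_top (a b c d : Plane) (ha : InQ1 a) (hb : InQ2 b) (hc : InQ3 c) (hd : InQ4 d)
    (h : b ∈ interior (convexHull ℝ ({a, c, d} : Set Plane))) : b 1 ≤ a 1 := by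
  have hconv : Convex ℝ {z : Plane | z 1 ≤ a 1} := by
    intro x hx y hy s t hs ht hst
    simp only [Set.mem_ofPred_eq, PiLp.add_apply, PiLp.smul_apply, smul_eq_mul] at *
    have h1 := mul_le_mul_of_nonneg_left hx hs
    have h2 := mul_le_mul_of_nonneg_left hy ht
    have h3 : s * a 1 + t * a 1 = a 1 := by rw [← add_mul, hst, one_mul]
    linarith
  have hsub : ({a, c, d} : Set Plane) ⊆ {z : Plane | z 1 ≤ a 1} := by
    rintro z (rfl | rfl | rfl)
    · exact le_refl (z 1)
    · exact le_trans hc.2 ha.2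
    · exact le_trans hd.2 ha.2
  exact convexHull_min hsub hconv (interior_subset h)

theorem aux_angle (a b c : Plane)
    (h0 : 0 ≤ (a 0 - b 0) * (c 0 - b 0)) (h1 : 0 ≤ (a 1 - b 1) * (c 1 - b 1)) :
    EuclideanGeometry.angle a b c ≤ π / 2 := by
  unfold EuclideanGeometry.angle InnerProductGeometry.angle
  rw [Real.arccos_le_pi_div_two]
  refine div_nonneg ?_ (by positivity)
  simp only [vsub_eq_sub, PiLp.inner_apply, Fin.sum_univ_two, PiLp.sub_apply,
    RCLike.inner_apply, conj_trivial]
  linarith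

/-- Let `P = {p₁,p₂,p₃,p₄}` and `Q = {q₁,q₂,q₃,q₄}` be disjoint quadruples with `pᵢ, qᵢ` in
the `i`-th closed quadrant, where `p₂` is the center of `P`, `q₂` is the center of `Q`,
`Q` is upward (the path `q₂q₄q₃q₁` is acute), and `p₂` is below `q₂`. Then the path
`p₁p₂q₁q₃q₄` is acute. -/
theorem acute_path_p1_p2_q1_q3_q4
    (p₁ p₂ p₃ p₄ q₁ q₂ q₃ q₄ : Plane)
    (hpne : p₁ ≠ p₂ ∧ p₁ ≠ p₃ ∧ p₁ ≠ p₄ ∧ p₂ ≠ p₃ ∧ p₂ ≠ p₄ ∧ p₃ ≠ p₄)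
    (hqne : q₁ ≠ q₂ ∧ q₁ ≠ q₃ ∧ q₁ ≠ q₄ ∧ q₂ ≠ q₃ ∧ q₂ ≠ q₄ ∧ q₃ ≠ q₄)
    (hPQ : ({p₁, p₂, p₃, p₄} : Set Plane) ∩ ({q₁, q₂, q₃, q₄} : Set Plane) = ∅)
    (hp₁ : InQ1 p₁) (hp₂ : InQ2 p₂) (hp₃ : InQ3 p₃) (hp₄ : InQ4 p₄)
    (hq₁ : InQ1 q₁) (hq₂ : InQ2 q₂) (hq₃ : InQ3 q₃) (hq₄ : InQ4 q₄)
    (hpc : p₂ ∈ interior (convexHull ℝ ({p₁, p₃, p₄} : Set Plane)))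
    (hqc : q₂ ∈ interior (convexHull ℝ ({q₁, q₃, q₄} : Set Plane)))
    (hQup : EuclideanGeometry.angle q₂ q₄ q₃ ≤ π / 2 ∧
            EuclideanGeometry.angle q₄ q₃ q₁ ≤ π / 2)
    (hbelow : p₂ 1 ≤ q₂ 1) :
    EuclideanGeometry.angle p₁ p₂ q₁ ≤ π / 2 ∧
    EuclideanGeometry.angle p₂ q₁ q₃ ≤ π / 2 ∧
    EuclideanGeometry.angle q₁ q₃ q₄ ≤ π / 2 := by
  have hp := aux_top p₁ p₂ p₃ p₄ hp₁ hp₂ hp₃ hp₄ hpc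
  have hq := aux_top q₁ q₂ q₃ q₄ hq₁ hq₂ hq₃ hq₄ hqc
  obtain ⟨a1, a2⟩ := hp₁
  obtain ⟨b1, b2⟩ := hp₂
  obtain ⟨c1, c2⟩ := hq₁
  obtain ⟨d1, d2⟩ := hq₃
  refine ⟨aux_angle _ _ _ ?_ ?_, aux_angle _ _ _ ?_ ?_, ?_⟩
  · exact mul_nonneg (by linarith) (by linarith)
  · exact mul_nonneg (by linarith) (by linarith)
  · exact mul_nonneg_of_nonpos_of_nonpos (by linarith) (by linarith)
  · exact mul_nonneg_of_nonpos_of_nonpos (by linarith) (by linarith)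
  · rw [EuclideanGeometry.angle_comm]
    exact hQup.2
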